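/- For every complex number q with 0 < |q| < 1, the cubic theta function c(q) = 3 (q^3; q^3)_∞^3 / (q; q)_∞ satisfies q / c(q) = − q^2 c(q^4)^2 / c(q^2)^3 + 3 q (q^4; q^4)_∞^2 (q^{12}; q^{12})_∞^2 / ( c(q^2)^2 (q^2; q^2)_∞ (q^6; q^6)_∞ ). -/

import Mathlib

/-- The q-shifted factorial `(a; q)_∞ = ∏_{n=0}^∞ (1 - a qⁿ)`. -/
noncomputable def qPoch (a q : ℂ) : ℂ := ∏' n : ℕ, (1 - a * q ^ n)

/-- The cubic theta function `c(q) = 3 (q³; q³)_∞³ / (q; q)_∞`. -/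
noncomputable def c (q : ℂ) : ℂ := 3 * qPoch (q ^ 3) (q ^ 3) ^ 3 / qPoch q q

/-!
The bilateral series `∑ xⁿ / (1 - a qⁿ)` is a quotient of theta functions (`jordanKronecker`): a
finite form of this is the partial fraction expansion of `(a x; q)_M / (a; q)_{M + 1}`, a case of
Lagrange interpolation, and Tannery's theorem gives the limit. As `c(q) / 3` is the case
`x = a = q` with base `q³`, splitting the series twice by the parity of `n` yields
`c(q) = A(q) + q c(q⁴)` with `A` an even eta quotient. Since also `c(q) c(-q) c(q⁴) = c(q²)³`,
`q / c(q) = q c(-q) c(q⁴) / c(q²)³ = q (A(q) - q c(q⁴)) c(q⁴) / c(q²)³`,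
and `A(q) c(q⁴) / c(q²)` is again an eta quotient.
-/

open Filter Topology

section FiniteProducts

/-- The finite `q`-shifted factorial `(a; q)_n = ∏_{i < n} (1 - a qⁱ)`, whose limit is `qPoch`. -/
def qPochFin {R : Type*} [CommRing R] (a q : R) (n : ℕ) : R :=
  ∏ i ∈ Finset.range n, (1 - a * q ^ i)

variable {R : Type*} [CommRing R]

lemma qPochFin_add (a q : R) (m n : ℕ) :
    qPochFin a q (m + n) = qPochFin a q m * qPochFin (a * q ^ m) q n := by
  simp only [qPochFin, Finset.prod_range_add, pow_add, mul_assoc]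

lemma qPochFin_mul (a q : R) (k n : ℕ) :
    qPochFin a q (k * n) = ∏ i ∈ Finset.range k, qPochFin (a * q ^ i) (q ^ k) n := by
  induction n with
  | zero => simp [qPochFin]
  | succ n ih =>
    rw [mul_add_one, qPochFin_add, ih]
    simp only [qPochFin, Finset.prod_range_succ, Finset.prod_mul_distrib]
    congr 1
    exact Finset.prod_congr rfl fun i _ => by ring

lemma qPochFin_mul_qPochFin_neg (a q : R) (n : ℕ) :
    qPochFin a q n * qPochFin (-a) q n = qPochFin (a ^ 2) (q ^ 2) n := by
  simp only [qPochFin, ← Finset.prod_mul_distrib]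
  exact Finset.prod_congr rfl fun i _ => by ring

lemma prod_range_erase_eq_mul {M : Type*} [CommMonoid M] (f : ℕ → M) (i m : ℕ) :
    ∏ j ∈ (Finset.range (i + 1 + m)).erase i, f j =
      (∏ j ∈ Finset.range i, f j) * ∏ j ∈ Finset.range m, f (i + 1 + j) := by
  have split : (Finset.range (i + 1 + m)).erase i =
      Finset.range i ∪ Finset.Ico (i + 1) (i + 1 + m) := by
    ext j
    simp only [Finset.mem_erase, Finset.mem_union, Finset.mem_range, Finset.mem_Ico]
    omega
  rw [split, Finset.prod_union, Finset.prod_Ico_eq_prod_range, Nat.add_sub_cancel_left]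
  exact Finset.disjoint_left.2 fun j hj hj' => by
    simp only [Finset.mem_range, Finset.mem_Ico] at hj hj'
    omega

variable {K : Type*} [Field K]

lemma qPochFin_div_pow {a q : K} (ha : a ≠ 0) (hq : q ≠ 0) (n : ℕ) :
    qPochFin (a / q ^ n) q n =
      a ^ n * qPochFin (q / a) q n * ∏ i ∈ Finset.range n, -(q ^ (i + 1))⁻¹ := by
  have pow_eq_prod : a ^ n = ∏ _i ∈ Finset.range n, a := by simp
  rw [qPochFin, ← Finset.prod_range_reflect, pow_eq_prod, qPochFin, ← Finset.prod_mul_distrib,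
    ← Finset.prod_mul_distrib]
  refine Finset.prod_congr rfl fun i hi => ?_
  obtain ⟨d, rfl⟩ := Nat.exists_eq_add_of_lt (Finset.mem_range.1 hi)
  rw [show i + d + 1 - 1 - i = d by omega]
  field_simp
  ring

lemma qPochFin_div_pow_div_qPochFin_div_pow {a b q : K} (ha : a ≠ 0) (hb : b ≠ 0) (hq : q ≠ 0)
    (n : ℕ) :
    qPochFin (a / q ^ n) q n / qPochFin (b / q ^ n) q n =
      (a / b) ^ n * (qPochFin (q / a) q n / qPochFin (q / b) q n) := by
  have hprod : ∏ i ∈ Finset.range n, -(q ^ (i + 1))⁻¹ ≠ 0 :=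
    Finset.prod_ne_zero_iff.2 fun i _ => neg_ne_zero.2 (inv_ne_zero (pow_ne_zero _ hq))
  rw [qPochFin_div_pow ha hq, qPochFin_div_pow hb hq, mul_div_mul_right _ _ hprod,
    mul_div_mul_comm, div_pow]

lemma eval_eq_sum_eval_mul_prod_div {ι : Type*} [DecidableEq ι] {s : Finset ι} {v : ι → K}
    {f : Polynomial K} (hv : Set.InjOn v s) (hf : f.degree < s.card) (y : K) :
    f.eval y = ∑ i ∈ s, f.eval (v i) * ∏ j ∈ s.erase i, (y - v j) / (v i - v j) := by
  conv_lhs => rw [Lagrange.eq_interpolate hv hf, Lagrange.interpolate_apply]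
  simp only [Polynomial.eval_finsetSum, Polynomial.eval_mul, Polynomial.eval_C, Lagrange.basis,
    Polynomial.eval_prod, Lagrange.basisDivisor, Polynomial.eval_sub, Polynomial.eval_X,
    div_eq_inv_mul]

lemma prod_erase_one_sub_pow_div_pow {q : K} (hq : q ≠ 0) (i m : ℕ) :
    ∏ j ∈ (Finset.range (i + 1 + m)).erase i, (1 - q ^ j / q ^ i) =
      qPochFin (1 / q ^ i) q i * qPochFin q q m := by
  rw [prod_range_erase_eq_mul, qPochFin, qPochFin]
  congr 1 <;> refine Finset.prod_congr rfl fun j _ => ?_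
  · ring
  · field_simp
    ring

lemma exists_polynomial_eval_eq_qPochFin (x q : R) (n : ℕ) :
    ∃ f : Polynomial R, f.natDegree ≤ n ∧ ∀ y, f.eval y = qPochFin (y * x) q n := by
  refine ⟨∏ i ∈ Finset.range n, (1 - Polynomial.C (x * q ^ i) * Polynomial.X), ?_, fun y => ?_⟩
  · have factor (i : ℕ) : (1 - Polynomial.C (x * q ^ i) * Polynomial.X).natDegree ≤ 1 := by
      compute_degree
    calc _ ≤ _ := Polynomial.natDegree_prod_le _ _
      _ ≤ ∑ _i ∈ Finset.range n, 1 := Finset.sum_le_sum fun i _ => factor i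
      _ = n := by simp
  · simp only [qPochFin, Polynomial.eval_prod, Polynomial.eval_sub, Polynomial.eval_one,
      Polynomial.eval_mul, Polynomial.eval_C, Polynomial.eval_X]
    exact Finset.prod_congr rfl fun i _ => by ring

lemma ne_zero_of_injective_pow {M : Type*} [MonoidWithZero M] {q : M}
    (hq : Function.Injective (q ^ · : ℕ → M)) : q ≠ 0 := by
  rintro rfl
  exact absurd (@hq 1 2 (by simp)) (by norm_num)

-- Lagrange interpolation of `b ↦ (b x; q)_M` at the nodes `b = q⁻ⁱ`, `0 ≤ i ≤ M`.
lemma qPochFin_mul_eq_sum {x q : K} (hx : x ≠ 0) (hq : Function.Injective (q ^ · : ℕ → K))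
    (b : K) (M : ℕ) :
    qPochFin (b * x) q M = ∑ i ∈ Finset.range (M + 1),
      x ^ i * (qPochFin (q / x) q i / qPochFin q q i *
        (qPochFin x q (M - i) / qPochFin q q (M - i))) *
        ∏ j ∈ (Finset.range (M + 1)).erase i, (1 - b * q ^ j) := by
  have hq0 := ne_zero_of_injective_pow hq
  obtain ⟨f, f_natDegree, f_eval⟩ := exists_polynomial_eval_eq_qPochFin x q M
  have f_degree : f.degree < (Finset.range (M + 1)).card := by
    rw [Finset.card_range]
    exact Polynomial.degree_le_of_natDegree_le f_natDegree |>.trans_lt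
      (by exact_mod_cast M.lt_succ_self)
  have nodes_injOn : Set.InjOn (fun i : ℕ => (q ^ i)⁻¹) (Finset.range (M + 1)) :=
    (inv_injective.comp hq).injOn
  rw [← f_eval, eval_eq_sum_eval_mul_prod_div nodes_injOn f_degree]
  refine Finset.sum_congr rfl fun i hi => ?_
  obtain ⟨m, rfl⟩ := Nat.exists_eq_add_of_le (Finset.mem_range_succ_iff.1 hi)
  have basis_factor : ∀ j ∈ (Finset.range (i + m + 1)).erase i,
      (b - (q ^ j)⁻¹) / ((q ^ i)⁻¹ - (q ^ j)⁻¹) = (1 - b * q ^ j) / (1 - q ^ j / q ^ i) := by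
    intro j _
    have hj : q ^ j ≠ 0 := pow_ne_zero _ hq0
    rw [← mul_div_mul_right _ _ (neg_ne_zero.2 hj)]
    congr 1 <;> field_simp <;> ring
  have node_value : qPochFin (x / q ^ i) q i / qPochFin (1 / q ^ i) q i =
      x ^ i * (qPochFin (q / x) q i / qPochFin q q i) := by
    simpa only [div_one] using qPochFin_div_pow_div_qPochFin_div_pow hx one_ne_zero hq0 i
  rw [f_eval, Finset.prod_congr rfl basis_factor, Finset.prod_div_distrib, add_right_comm i m 1,
    prod_erase_one_sub_pow_div_pow hq0, qPochFin_add, inv_mul_eq_div,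
    div_mul_cancel₀ _ (pow_ne_zero _ hq0), Nat.add_sub_cancel_left, ← mul_assoc, ← node_value]
  ring

lemma qPochFin_div_qPochFin_eq_sum {b x q : K} (hx : x ≠ 0)
    (hq : Function.Injective (q ^ · : ℕ → K)) (hb : ∀ i : ℕ, 1 - b * q ^ i ≠ 0) (M : ℕ) :
    qPochFin (b * x) q M / qPochFin b q (M + 1) = ∑ i ∈ Finset.range (M + 1),
      x ^ i / (1 - b * q ^ i) * (qPochFin (q / x) q i / qPochFin q q i *
        (qPochFin x q (M - i) / qPochFin q q (M - i))) := by
  rw [qPochFin_mul_eq_sum hx hq, Finset.sum_div]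
  refine Finset.sum_congr rfl fun i hi => ?_
  have herase : ∏ j ∈ (Finset.range (M + 1)).erase i, (1 - b * q ^ j) ≠ 0 :=
    Finset.prod_ne_zero_iff.2 fun j _ => hb j
  have hsplit : qPochFin b q (M + 1) =
      (1 - b * q ^ i) * ∏ j ∈ (Finset.range (M + 1)).erase i, (1 - b * q ^ j) :=
    (Finset.mul_prod_erase _ _ hi).symm
  rw [hsplit, mul_div_mul_right _ _ herase, mul_div_right_comm]

lemma sum_range_eq_sum_Icc_neg {M : Type*} [AddCommMonoid M] (f : ℤ → M) (N : ℕ) :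
    ∑ i ∈ Finset.range (N + N + 1), f (i - N) = ∑ n ∈ Finset.Icc (-N : ℤ) N, f n := by
  refine Finset.sum_nbij' (fun i => (i : ℤ) - N) (fun n => (n + N).toNat) ?_ ?_ ?_ ?_ ?_ <;>
    simp only [Finset.mem_range, Finset.mem_Icc, implies_true] <;> omega

-- The previous identity at `b = a q⁻ᴺ`, which makes it symmetric about `n = 0`.
lemma qPochFin_theta_quotient_eq_sum {a x q : K} (ha0 : a ≠ 0) (hx : x ≠ 0)
    (hq : Function.Injective (q ^ · : ℕ → K)) (ha : ∀ n : ℤ, 1 - a * q ^ n ≠ 0) (N : ℕ) :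
    qPochFin (a * x) q N * qPochFin (q / (a * x)) q N /
        (qPochFin a q (N + 1) * qPochFin (q / a) q N) =
      ∑ n ∈ Finset.Icc (-N : ℤ) N, x ^ n / (1 - a * q ^ n) *
        (qPochFin (q / x) q (N + n).toNat / qPochFin q q (N + n).toNat *
          (qPochFin x q (N - n).toNat / qPochFin q q (N - n).toNat)) := by
  have hq0 := ne_zero_of_injective_pow hq
  have hqN : q ^ N ≠ 0 := pow_ne_zero _ hq0
  have shift (i : ℕ) : a / q ^ N * q ^ i = a * q ^ ((i : ℤ) - N) := by
    rw [zpow_sub₀ hq0, zpow_natCast, zpow_natCast]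
    ring
  have key := qPochFin_div_qPochFin_eq_sum (M := N + N) hx hq (fun i => shift i ▸ ha (i - N))
  rw [div_mul_eq_mul_div, qPochFin_add, add_assoc N N 1, qPochFin_add _ _ N (N + 1),
    div_mul_cancel₀ _ hqN, div_mul_cancel₀ _ hqN, mul_div_mul_comm,
    qPochFin_div_pow_div_qPochFin_div_pow (mul_ne_zero ha0 hx) ha0 hq0,
    mul_div_cancel_left₀ _ ha0, mul_assoc, ← eq_inv_mul_iff_mul_eq₀ (pow_ne_zero _ hx)] at key
  rw [mul_comm (qPochFin a q _), mul_comm (qPochFin (a * x) q N), mul_div_mul_comm, key,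
    Finset.mul_sum, ← sum_range_eq_sum_Icc_neg, add_assoc N N 1]
  refine Finset.sum_congr rfl fun i _ => ?_
  rw [shift, zpow_sub₀ hx, zpow_natCast, zpow_natCast, add_sub_cancel, Int.toNat_natCast,
    show ((N : ℤ) - (i - N)).toNat = N + N - i by omega]
  ring

end FiniteProducts

section InfiniteProducts

variable {a q x : ℂ}

lemma summable_norm_neg_mul_pow (a : ℂ) (hq : ‖q‖ < 1) : Summable fun n : ℕ => ‖-(a * q ^ n)‖ := by
  simp only [norm_neg, norm_mul, norm_pow]
  exact (summable_geometric_of_lt_one (norm_nonneg _) hq).mul_left _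

lemma tendsto_qPochFin (a : ℂ) (hq : ‖q‖ < 1) :
    Tendsto (fun n => qPochFin a q n) atTop (𝓝 (qPoch a q)) := by
  simpa only [← sub_eq_add_neg, qPochFin, qPoch] using
    (multipliable_one_add_of_summable (summable_norm_neg_mul_pow a hq)).tendsto_prod_tprod_nat

lemma qPoch_ne_zero_of_forall (hq : ‖q‖ < 1) (h : ∀ n : ℕ, 1 - a * q ^ n ≠ 0) : qPoch a q ≠ 0 := by
  simpa only [← sub_eq_add_neg, qPoch] using tprod_one_add_ne_zero_of_summable
    (by simpa only [← sub_eq_add_neg] using h) (summable_norm_neg_mul_pow a hq)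

lemma qPoch_ne_zero (ha : ‖a‖ < 1) (hq : ‖q‖ < 1) : qPoch a q ≠ 0 := by
  refine qPoch_ne_zero_of_forall hq fun n h => ?_
  have hlt : ‖a * q ^ n‖ < 1 := by
    rw [norm_mul, norm_pow]
    exact mul_lt_one_of_nonneg_of_lt_one_left (norm_nonneg _) ha
      (pow_le_one₀ (norm_nonneg _) hq.le)
  rw [← sub_eq_zero.1 h, norm_one] at hlt
  exact lt_irrefl _ hlt

lemma qPoch_one (q : ℂ) : qPoch 1 q = 0 :=
  tprod_of_exists_eq_zero ⟨0, by simp⟩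

lemma norm_pow_lt_one {K : Type*} [NormedDivisionRing K] {q : K} {k : ℕ} (hq : ‖q‖ < 1)
    (hk : k ≠ 0) : ‖q ^ k‖ < 1 := by
  rw [norm_pow]
  exact pow_lt_one₀ (norm_nonneg _) hq hk

lemma qPoch_eq_prod {k : ℕ} (a : ℂ) (hq : ‖q‖ < 1) (hk : k ≠ 0) :
    qPoch a q = ∏ i ∈ Finset.range k, qPoch (a * q ^ i) (q ^ k) := by
  refine tendsto_nhds_unique
    ((tendsto_qPochFin a hq).comp (tendsto_id.const_mul_atTop' (Nat.pos_of_ne_zero hk)))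
    ((tendsto_finsetProd _ fun i _ =>
      tendsto_qPochFin (a * q ^ i) (norm_pow_lt_one hq hk)).congr fun n => ?_)
  exact (qPochFin_mul a q k n).symm

lemma qPoch_mul_qPoch_neg (a : ℂ) (hq : ‖q‖ < 1) :
    qPoch a q * qPoch (-a) q = qPoch (a ^ 2) (q ^ 2) :=
  tendsto_nhds_unique ((tendsto_qPochFin a hq).mul (tendsto_qPochFin (-a) hq))
    ((tendsto_qPochFin (a ^ 2) (norm_pow_lt_one hq two_ne_zero)).congr fun n =>
      (qPochFin_mul_qPochFin_neg a q n).symm)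

lemma qPoch_self_ne_zero {k : ℕ} (hq : ‖q‖ < 1) (hk : k ≠ 0) : qPoch (q ^ k) (q ^ k) ≠ 0 :=
  qPoch_ne_zero (norm_pow_lt_one hq hk) (norm_pow_lt_one hq hk)

lemma qPoch_pow_eq_prod {j k : ℕ} (i : ℕ) (hq : ‖q‖ < 1) (hj : j ≠ 0) (hk : k ≠ 0) :
    qPoch (q ^ i) (q ^ j) = ∏ m ∈ Finset.range k, qPoch (q ^ (i + j * m)) (q ^ (j * k)) := by
  simpa only [← pow_mul, ← pow_add] using qPoch_eq_prod (q ^ i) (norm_pow_lt_one hq hj) hk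

lemma qPoch_neg_self (hq : ‖q‖ < 1) :
    qPoch (-q) (-q) * qPoch q q * qPoch (q ^ 4) (q ^ 4) = qPoch (q ^ 2) (q ^ 2) ^ 3 := by
  have split {r : ℂ} (hr : ‖r‖ < 1) : qPoch r r = qPoch r (r ^ 2) * qPoch (r ^ 2) (r ^ 2) := by
    rw [qPoch_eq_prod r hr two_ne_zero, Finset.prod_range_succ, Finset.prod_range_one, pow_zero,
      mul_one, pow_one, sq]
  have hq2 : ‖q ^ 2‖ < 1 := norm_pow_lt_one hq two_ne_zero
  have split_neg := split (r := -q) (by rwa [norm_neg])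
  have split_sq := split hq2
  have odd_mul_odd_neg := qPoch_mul_qPoch_neg q hq2
  rw [neg_sq] at split_neg
  rw [← pow_mul] at split_sq odd_mul_odd_neg
  calc qPoch (-q) (-q) * qPoch q q * qPoch (q ^ 4) (q ^ 4)
    _ = qPoch q (q ^ 2) * qPoch (-q) (q ^ 2) * qPoch (q ^ 4) (q ^ 4) *
          qPoch (q ^ 2) (q ^ 2) ^ 2 := by
      rw [split_neg, split hq]
      ring
    _ = qPoch (q ^ 2) (q ^ 2) ^ 3 := by
      rw [odd_mul_odd_neg, ← split_sq]
      ring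

end InfiniteProducts

section Theta

/-- The modified Jacobi theta function `θ(x; q) = (x; q)_∞ (q/x; q)_∞`. -/
noncomputable def qTheta (x q : ℂ) : ℂ := qPoch x q * qPoch (q / x) q

variable {a q x : ℂ}

lemma qTheta_div_left (x : ℂ) (hq : q ≠ 0) : qTheta (q / x) q = qTheta x q := by
  rw [qTheta, qTheta, div_div_cancel₀ hq, mul_comm]

lemma qTheta_self (hq : q ≠ 0) : qTheta q q = 0 := by
  rw [qTheta, div_self hq, qPoch_one, mul_zero]

lemma qTheta_ne_zero (hq : ‖q‖ < 1) (h : ∀ n : ℤ, 1 - x * q ^ n ≠ 0) :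
    qTheta x q ≠ 0 := by
  refine mul_ne_zero (qPoch_ne_zero_of_forall hq fun n => by simpa using h n)
    (qPoch_ne_zero_of_forall hq fun n hn => h (-(n + 1 : ℕ)) ?_)
  have hx : x ≠ 0 := by
    rintro rfl
    simp at hn
  have hpow : q ^ (n + 1) = x := by
    rw [sub_eq_zero, div_mul_eq_mul_div, eq_div_iff hx, one_mul] at hn
    rw [pow_succ', hn]
  rw [zpow_neg, zpow_natCast, hpow, mul_inv_cancel₀ hx, sub_self]

lemma norm_div_lt_one {K : Type*} [NormedDivisionRing K] {q x : K} (h : ‖q‖ < ‖x‖) :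
    ‖q / x‖ < 1 := by
  rw [norm_div]
  exact (div_lt_one ((norm_nonneg q).trans_lt h)).2 h

lemma qTheta_ne_zero_of_norm (hqx : ‖q‖ < ‖x‖) (hx : ‖x‖ < 1) : qTheta x q ≠ 0 :=
  mul_ne_zero (qPoch_ne_zero hx (hqx.trans hx)) (qPoch_ne_zero (norm_div_lt_one hqx) (hqx.trans hx))

/-- The Jordan–Kronecker function `(q; q)_∞² θ(a x; q) / (θ(x; q) θ(a; q))`, which is the sum of
the bilateral series `∑ xⁿ / (1 - a qⁿ)` in the annulus `|q| < |x| < 1`. -/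
noncomputable def jordanKronecker (x a q : ℂ) : ℂ :=
  qPoch q q ^ 2 * qTheta (a * x) q / (qTheta x q * qTheta a q)

lemma jordanKronecker_comm (x a q : ℂ) : jordanKronecker x a q = jordanKronecker a x q := by
  rw [jordanKronecker, jordanKronecker, mul_comm a x, mul_comm (qTheta x q)]

lemma summable_norm_zpow_div (hq0 : q ≠ 0) (hqx : ‖q‖ < ‖x‖) (hx : ‖x‖ < 1) (ha : a ≠ 0) :
    Summable fun n : ℤ => ‖x ^ n / (1 - a * q ^ n)‖ := by
  have tendsto_pow : Tendsto (q ^ ·) atTop (𝓝 0) :=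
    tendsto_pow_atTop_nhds_zero_of_norm_lt_one (hqx.trans hx)
  have summable_pow_mul {y l : ℂ} {u : ℕ → ℂ} (hy : ‖y‖ < 1) (hu : Tendsto u atTop (𝓝 l)) :
      Summable fun n => y ^ n * u n :=
    Summable.mul_tendsto_const (summable_norm_geometric_of_norm_lt_one hy)
      (Nat.cofinite_eq_atTop ▸ hu)
  refine (Summable.of_nat_of_neg ?_ ?_).norm
  · have hu : Tendsto (fun n : ℕ => (1 - a * q ^ n)⁻¹) atTop (𝓝 (1 - a * 0)⁻¹) :=
      ((tendsto_pow.const_mul a).const_sub 1).inv₀ (by simp)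
    exact (summable_pow_mul hx hu).congr fun n => by simp [div_eq_mul_inv]
  · have hu : Tendsto (fun n : ℕ => (q ^ n - a)⁻¹) atTop (𝓝 (0 - a)⁻¹) :=
      (tendsto_pow.sub_const a).inv₀ (by simpa using ha)
    refine (summable_pow_mul (norm_div_lt_one hqx) hu).congr fun n => ?_
    have hqn : q ^ n ≠ 0 := pow_ne_zero _ hq0
    rw [zpow_neg, zpow_neg, zpow_natCast, zpow_natCast, ← mul_div_mul_right _ (1 - _) hqn, sub_mul,
      one_mul, inv_mul_cancel_right₀ hqn]
    ring

lemma tendsto_sum_Icc_neg_mul {R : Type*} [NormedRing R] [CompleteSpace R] {f : ℤ → R}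
    {u v : ℕ → R} {U V : R} (hf : Summable fun n => ‖f n‖)
    (hu : Tendsto u atTop (𝓝 U)) (hv : Tendsto v atTop (𝓝 V)) :
    Tendsto (fun N : ℕ => ∑ n ∈ Finset.Icc (-N : ℤ) N,
      f n * (u (N + n).toNat * v (N - n).toNat)) atTop (𝓝 ((∑' n, f n) * (U * V))) := by
  obtain ⟨C, hC⟩ := (Metric.isBounded_range_of_tendsto _ hu).exists_norm_le
  obtain ⟨D, hD⟩ := (Metric.isBounded_range_of_tendsto _ hv).exists_norm_le
  simp only [Set.forall_mem_range] at hC hD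
  have index_tendsto (n : ℤ) : Tendsto (fun N : ℕ => ((N : ℤ) + n).toNat) atTop atTop :=
    tendsto_atTop.2 fun b => by
      filter_upwards [eventually_ge_atTop (b + n.natAbs)] with N hN
      omega
  let F (N : ℕ) : ℤ → R := Set.indicator (Finset.Icc (-N : ℤ) N)
    fun n => f n * (u (N + n).toNat * v (N - n).toNat)
  have F_tsum (N : ℕ) : ∑' n, F N n = ∑ n ∈ Finset.Icc (-N : ℤ) N,
      f n * (u (N + n).toNat * v (N - n).toNat) := (sum_eq_tsum_indicator _ _).symm
  have F_tendsto (n : ℤ) : Tendsto (F · n) atTop (𝓝 (f n * (U * V))) := by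
    have hlim := ((hu.comp (index_tendsto n)).mul (hv.comp (index_tendsto (-n)))).const_mul (f n)
    refine hlim.congr' ?_
    filter_upwards [eventually_ge_atTop n.natAbs] with N hN
    have hn : n ∈ ((Finset.Icc (-N : ℤ) N : Finset ℤ) : Set ℤ) :=
      Finset.mem_coe.2 (Finset.mem_Icc.2 ⟨by omega, by omega⟩)
    simp only [F, Set.indicator_of_mem hn, Function.comp_apply, sub_eq_add_neg]
  have F_le (N : ℕ) (n : ℤ) : ‖F N n‖ ≤ ‖f n‖ * (C * D) :=
    (norm_indicator_le_norm_self _ _).trans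
      (norm_mul_le_of_le le_rfl (norm_mul_le_of_le (hC _) (hD _)))
  rw [← hf.of_norm.tsum_mul_right]
  exact (tendsto_tsum_of_dominated_convergence (hf.mul_right (C * D)) F_tendsto
    (.of_forall F_le)).congr F_tsum

theorem hasSum_jordanKronecker (hq0 : q ≠ 0) (hqx : ‖q‖ < ‖x‖) (hx : ‖x‖ < 1) (ha0 : a ≠ 0)
    (ha : ∀ n : ℤ, 1 - a * q ^ n ≠ 0) :
    HasSum (fun n : ℤ => x ^ n / (1 - a * q ^ n)) (jordanKronecker x a q) := by
  have hx0 : x ≠ 0 := norm_pos_iff.1 ((norm_nonneg _).trans_lt hqx)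
  have hq : ‖q‖ < 1 := hqx.trans hx
  have pow_injective : Function.Injective (q ^ · : ℕ → ℂ) := by
    refine Function.Injective.of_comp (f := norm) ?_
    simpa only [Function.comp_def, norm_pow] using
      pow_right_injective₀ (norm_pos_iff.2 hq0) hq.ne
  have hqq : qPoch q q ≠ 0 := qPoch_ne_zero hq hq
  have hθx : qTheta x q ≠ 0 := qTheta_ne_zero_of_norm hqx hx
  have hθa : qTheta a q ≠ 0 := qTheta_ne_zero hq ha
  have coeff_tendsto (b : ℂ) : Tendsto (fun n => qPochFin b q n / qPochFin q q n) atTop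
      (𝓝 (qPoch b q / qPoch q q)) :=
    (tendsto_qPochFin b hq).div (tendsto_qPochFin q hq) hqq
  have hsummable := summable_norm_zpow_div hq0 hqx hx ha0
  have sum_side := tendsto_sum_Icc_neg_mul hsummable (coeff_tendsto (q / x)) (coeff_tendsto x)
  have product_side : Tendsto (fun N => qPochFin (a * x) q N * qPochFin (q / (a * x)) q N /
      (qPochFin a q (N + 1) * qPochFin (q / a) q N)) atTop
      (𝓝 (qTheta (a * x) q / qTheta a q)) :=
    ((tendsto_qPochFin _ hq).mul (tendsto_qPochFin _ hq)).div
      (((tendsto_add_atTop_iff_nat 1).2 (tendsto_qPochFin a hq)).mul (tendsto_qPochFin _ hq)) hθa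
  have hlim := tendsto_nhds_unique
    (sum_side.congr fun N => (qPochFin_theta_quotient_eq_sum ha0 hx0 pow_injective ha N).symm)
    product_side
  have tsum_eq : ∑' n : ℤ, x ^ n / (1 - a * q ^ n) = jordanKronecker x a q := by
    rw [div_mul_div_comm, mul_comm (qPoch (q / x) q), ← qTheta, ← sq] at hlim
    rw [jordanKronecker]
    field_simp at hlim ⊢
    linear_combination hlim
  exact tsum_eq ▸ hsummable.of_norm.hasSum

lemma hasSum_int_of_even_odd {M : Type*} [AddCommMonoid M] [TopologicalSpace M] [ContinuousAdd M]
    {f : ℤ → M} {s t : M} (he : HasSum (fun n => f (2 * n)) s)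
    (ho : HasSum (fun n => f (2 * n + 1)) t) : HasSum f (s + t) := by
  have two_mul_injective := mul_right_injective₀ (two_ne_zero' ℤ)
  have he' := two_mul_injective.hasSum_range_iff.2 he
  have ho' := ((add_left_injective 1).comp two_mul_injective).hasSum_range_iff.2 ho
  exact he'.add_isCompl (by simpa [Function.comp_def] using Int.isCompl_even_odd) ho'

lemma jordanKronecker_two_dissection (hq0 : q ≠ 0) (hqx : ‖q‖ < ‖x‖) (hx : ‖x‖ < 1) (ha0 : a ≠ 0)
    (ha : ∀ n : ℤ, 1 - a * q ^ n ≠ 0) :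
    jordanKronecker x a q =
      jordanKronecker (x ^ 2) a (q ^ 2) + x * jordanKronecker (x ^ 2) (a * q) (q ^ 2) := by
  have hx0 : x ≠ 0 := norm_pos_iff.1 ((norm_nonneg _).trans_lt hqx)
  have hqx2 : ‖q ^ 2‖ < ‖x ^ 2‖ := by
    rw [norm_pow, norm_pow]
    gcongr
  have hx2 : ‖x ^ 2‖ < 1 := norm_pow_lt_one hx two_ne_zero
  have even_pow (y : ℂ) (n : ℤ) : (y ^ 2) ^ n = y ^ (2 * n) := by rw [zpow_mul]; norm_cast
  have odd_pow (n : ℤ) : a * q * (q ^ 2) ^ n = a * q ^ (2 * n + 1) := by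
    rw [even_pow, zpow_add_one₀ hq0]
    ring
  have even_sum := hasSum_jordanKronecker (pow_ne_zero 2 hq0) hqx2 hx2 ha0
    fun n => by simpa only [even_pow] using ha (2 * n)
  have odd_sum := hasSum_jordanKronecker (pow_ne_zero 2 hq0) hqx2 hx2 (mul_ne_zero ha0 hq0)
    fun n => by simpa only [odd_pow] using ha (2 * n + 1)
  refine (hasSum_jordanKronecker hq0 hqx hx ha0 ha).unique
    (hasSum_int_of_even_odd (even_sum.congr_fun fun n => ?_)
      ((odd_sum.mul_left x).congr_fun fun n => ?_))
  · rw [even_pow, even_pow]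
  · rw [odd_pow, even_pow, zpow_add_one₀ hx0]
    ring

end Theta

section CubicTheta

variable {q : ℂ}

lemma qTheta_pow {i j : ℕ} (hq : q ≠ 0) :
    qTheta (q ^ i) (q ^ (i + j)) = qPoch (q ^ i) (q ^ (i + j)) * qPoch (q ^ j) (q ^ (i + j)) := by
  rw [qTheta, pow_add, mul_div_cancel_left₀ _ (pow_ne_zero i hq)]

lemma qTheta_pow_ne_zero {i j : ℕ} (hq0 : q ≠ 0) (hq : ‖q‖ < 1) (hi : i ≠ 0) (hj : j ≠ 0) :
    qTheta (q ^ i) (q ^ (i + j)) ≠ 0 := by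
  rw [qTheta_pow hq0]
  exact mul_ne_zero (qPoch_ne_zero (norm_pow_lt_one hq hi) (norm_pow_lt_one hq (by omega)))
    (qPoch_ne_zero (norm_pow_lt_one hq hj) (norm_pow_lt_one hq (by omega)))

lemma qPoch_self_eq_mul_qTheta_three (hq0 : q ≠ 0) (hq : ‖q‖ < 1) :
    qPoch q q = qTheta q (q ^ 3) * qPoch (q ^ 3) (q ^ 3) := by
  have h := qPoch_pow_eq_prod 1 hq one_ne_zero three_ne_zero
  have hθ := qTheta_pow (i := 1) (j := 2) hq0
  simp only [Finset.prod_range_succ, Finset.prod_range_zero, one_mul, pow_one, Nat.reduceAdd]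
    at h hθ
  rw [h, hθ]

lemma qPoch_self_mul_qPoch_six (hq0 : q ≠ 0) (hq : ‖q‖ < 1) :
    qPoch q q * qPoch (q ^ 6) (q ^ 6) =
      qTheta q (q ^ 6) * qPoch (q ^ 2) (q ^ 2) * qPoch (q ^ 3) (q ^ 3) := by
  have h1 := qPoch_pow_eq_prod 1 hq one_ne_zero (k := 6) (by norm_num)
  have h2 := qPoch_pow_eq_prod 2 hq two_ne_zero three_ne_zero
  have h3 := qPoch_pow_eq_prod 3 hq three_ne_zero two_ne_zero
  have hθ := qTheta_pow (i := 1) (j := 5) hq0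
  simp only [Finset.prod_range_succ, Finset.prod_range_zero, one_mul, pow_one, Nat.reduceMul,
    Nat.reduceAdd] at h1 h2 h3 hθ
  rw [h1, h2, h3, hθ]
  ring

lemma jordanKronecker_self_cube (hq0 : q ≠ 0) (hq : ‖q‖ < 1) :
    jordanKronecker q q (q ^ 3) = c q / 3 := by
  have hE3 : qPoch (q ^ 3) (q ^ 3) ≠ 0 := qPoch_self_ne_zero hq three_ne_zero
  have hθ : qTheta q (q ^ 3) ≠ 0 := by
    simpa using qTheta_pow_ne_zero hq0 hq one_ne_zero two_ne_zero
  have hθ2 : qTheta (q * q) (q ^ 3) = qTheta q (q ^ 3) := by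
    rw [← qTheta_div_left q (pow_ne_zero 3 hq0)]
    congr 1
    field_simp
  rw [jordanKronecker, hθ2, c, qPoch_self_eq_mul_qTheta_three hq0 hq]
  field_simp

lemma jordanKronecker_self_six (hq0 : q ≠ 0) (hq : ‖q‖ < 1) :
    jordanKronecker q q (q ^ 6) = qPoch (q ^ 2) (q ^ 2) ^ 3 * qPoch (q ^ 3) (q ^ 3) ^ 2 /
      (qPoch q q ^ 2 * qPoch (q ^ 6) (q ^ 6)) := by
  have hE1 : qPoch q q ≠ 0 := qPoch_ne_zero hq hq
  have hE2 : qPoch (q ^ 2) (q ^ 2) ≠ 0 := qPoch_self_ne_zero hq two_ne_zero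
  have hE6 : qPoch (q ^ 6) (q ^ 6) ≠ 0 := qPoch_self_ne_zero hq (by norm_num)
  have hE3 : qPoch (q ^ 3) (q ^ 3) ≠ 0 := qPoch_self_ne_zero hq three_ne_zero
  have hθ1 : qTheta q (q ^ 6) = qPoch q q * qPoch (q ^ 6) (q ^ 6) /
      (qPoch (q ^ 2) (q ^ 2) * qPoch (q ^ 3) (q ^ 3)) := by
    rw [eq_div_iff (mul_ne_zero hE2 hE3), qPoch_self_mul_qPoch_six hq0 hq, mul_assoc]
  have hθ2 : qTheta (q * q) (q ^ 6) = qPoch (q ^ 2) (q ^ 2) / qPoch (q ^ 6) (q ^ 6) := by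
    rw [eq_div_iff hE6, ← sq]
    simpa only [← pow_mul, Nat.reduceMul] using
      (qPoch_self_eq_mul_qTheta_three (pow_ne_zero 2 hq0) (norm_pow_lt_one hq two_ne_zero)).symm
  rw [jordanKronecker, hθ1, hθ2]
  field_simp

lemma jordanKronecker_pow_four_six (hq0 : q ≠ 0) (hq : ‖q‖ < 1) :
    jordanKronecker q (q ^ 4) (q ^ 6) = c (q ^ 2) / 3 := by
  have hθ : qTheta (q ^ 4 * q) (q ^ 6) = qTheta q (q ^ 6) := by
    rw [← qTheta_div_left q (pow_ne_zero 6 hq0)]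
    congr 1
    field_simp
  have hθ4 : qTheta (q ^ 4) (q ^ 6) = qTheta (q ^ 2 * q ^ 2) (q ^ 6) := by rw [← pow_add]
  have hθ_ne : qTheta q (q ^ 6) ≠ 0 := by
    simpa using qTheta_pow_ne_zero hq0 hq one_ne_zero (j := 5) (by norm_num)
  have hθ2 : qTheta (q ^ 2) (q ^ 6) = qTheta (q ^ 4) (q ^ 6) := by
    rw [← qTheta_div_left (q ^ 2) (pow_ne_zero 6 hq0)]
    congr 1
    field_simp
  have hθ2_ne : qTheta (q ^ 4) (q ^ 6) ≠ 0 :=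
    qTheta_pow_ne_zero hq0 hq four_ne_zero (j := 2) two_ne_zero
  have h := jordanKronecker_self_cube (pow_ne_zero 2 hq0) (norm_pow_lt_one hq two_ne_zero)
  rw [← h, jordanKronecker, jordanKronecker, ← pow_mul, hθ, ← hθ4, hθ2]
  field_simp

lemma one_sub_pow_mul_zpow_ne_zero {K : Type*} [NormedField K] {q : K} {j k : ℕ} (hq0 : q ≠ 0)
    (hq : ‖q‖ < 1) (hkj : ¬ k ∣ j) (n : ℤ) : 1 - q ^ j * (q ^ k) ^ n ≠ 0 := by
  intro h
  have hexp : ‖q‖ ^ ((j : ℤ) + k * n) = ‖q‖ ^ (0 : ℤ) := by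
    rw [← norm_zpow, zpow_add₀ hq0, zpow_mul, zpow_natCast, zpow_natCast, ← sub_eq_zero.1 h,
      norm_one, zpow_zero]
  have hj : (j : ℤ) = k * -n := by
    linarith [zpow_right_injective₀ (norm_pos_iff.2 hq0) hq.ne hexp]
  exact hkj (Int.natCast_dvd_natCast.1 ⟨-n, hj⟩)

lemma jordanKronecker_pow_two_dissection {i j k : ℕ} (hq0 : q ≠ 0) (hq : ‖q‖ < 1) (hi : i ≠ 0)
    (hik : i < k) (hkj : ¬ k ∣ j) :
    jordanKronecker (q ^ i) (q ^ j) (q ^ k) = jordanKronecker (q ^ (2 * i)) (q ^ j) (q ^ (2 * k)) +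
      q ^ i * jordanKronecker (q ^ (2 * i)) (q ^ (j + k)) (q ^ (2 * k)) := by
  have hnorm : ‖q ^ k‖ < ‖q ^ i‖ := by
    rw [norm_pow, norm_pow]
    exact pow_lt_pow_right_of_lt_one₀ (norm_pos_iff.2 hq0) hq hik
  rw [jordanKronecker_two_dissection (pow_ne_zero k hq0) hnorm (norm_pow_lt_one hq hi)
    (pow_ne_zero j hq0) (one_sub_pow_mul_zpow_ne_zero hq0 hq hkj), ← pow_mul', ← pow_mul', pow_add]

/-- The even part of `c`, as an eta quotient. -/
noncomputable def cEvenPart (q : ℂ) : ℂ :=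
  3 * qPoch (q ^ 4) (q ^ 4) ^ 3 * qPoch (q ^ 6) (q ^ 6) ^ 2 /
    (qPoch (q ^ 2) (q ^ 2) ^ 2 * qPoch (q ^ 12) (q ^ 12))

theorem c_two_dissection (hq0 : q ≠ 0) (hq : ‖q‖ < 1) : c q = cEvenPart q + q * c (q ^ 4) := by
  have hq2_ne : q ^ 2 ≠ 0 := pow_ne_zero 2 hq0
  have hq2 : ‖q ^ 2‖ < 1 := norm_pow_lt_one hq two_ne_zero
  have vanishing : jordanKronecker (q ^ 2) (q ^ 4) (q ^ 6) = 0 := by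
    rw [jordanKronecker, ← pow_add, qTheta_self (pow_ne_zero 6 hq0), mul_zero, zero_div]
  have outer := jordanKronecker_pow_two_dissection (i := 1) (j := 1) (k := 3) hq0 hq
    (by norm_num) (by norm_num) (by norm_num)
  have inner := jordanKronecker_pow_two_dissection (i := 1) (j := 2) (k := 6) hq0 hq
    (by norm_num) (by norm_num) (by norm_num)
  have first := jordanKronecker_self_six hq2_ne hq2
  have second := jordanKronecker_pow_four_six hq2_ne hq2
  simp only [← pow_mul, Nat.reduceMul, Nat.reduceAdd, pow_one] at outer inner first second
  rw [vanishing, mul_zero, add_zero, jordanKronecker_self_cube hq0 hq, jordanKronecker_comm,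
    inner, first, second] at outer
  rw [cEvenPart]
  linear_combination 3 * outer

theorem c_neg_two_dissection (hq0 : q ≠ 0) (hq : ‖q‖ < 1) :
    c (-q) = cEvenPart q - q * c (q ^ 4) := by
  have neg_pow_two_mul (k : ℕ) : (-q) ^ (2 * k) = q ^ (2 * k) := (even_two_mul k).neg_pow q
  rw [c_two_dissection (neg_ne_zero.2 hq0) ((norm_neg q).trans_lt hq), cEvenPart,
    neg_pow_two_mul 1, neg_pow_two_mul 2, neg_pow_two_mul 3, neg_pow_two_mul 6, cEvenPart, neg_mul,
    sub_eq_add_neg]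

lemma cEvenPart_mul_c_pow_four (hq : ‖q‖ < 1) :
    cEvenPart q * c (q ^ 4) = 3 * qPoch (q ^ 4) (q ^ 4) ^ 2 * qPoch (q ^ 12) (q ^ 12) ^ 2 /
      (qPoch (q ^ 2) (q ^ 2) * qPoch (q ^ 6) (q ^ 6)) * c (q ^ 2) := by
  have hE2 : qPoch (q ^ 2) (q ^ 2) ≠ 0 := qPoch_self_ne_zero hq (by norm_num)
  have hE4 : qPoch (q ^ 4) (q ^ 4) ≠ 0 := qPoch_self_ne_zero hq (by norm_num)
  have hE6 : qPoch (q ^ 6) (q ^ 6) ≠ 0 := qPoch_self_ne_zero hq (by norm_num)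
  have hE12 : qPoch (q ^ 12) (q ^ 12) ≠ 0 := qPoch_self_ne_zero hq (by norm_num)
  simp only [cEvenPart, c, ← pow_mul, Nat.reduceMul]
  field_simp

lemma c_ne_zero (hq : ‖q‖ < 1) : c q ≠ 0 :=
  div_ne_zero (mul_ne_zero three_ne_zero (pow_ne_zero 3 (qPoch_self_ne_zero hq three_ne_zero)))
    (qPoch_ne_zero hq hq)

theorem c_mul_c_neg (hq : ‖q‖ < 1) : c q * c (-q) * c (q ^ 4) = c (q ^ 2) ^ 3 := by
  have hE1 : qPoch q q ≠ 0 := qPoch_ne_zero hq hq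
  have hE2 : qPoch (q ^ 2) (q ^ 2) ≠ 0 := qPoch_self_ne_zero hq (by norm_num)
  have hE3 : qPoch (q ^ 3) (q ^ 3) ≠ 0 := qPoch_self_ne_zero hq (by norm_num)
  have hE4 : qPoch (q ^ 4) (q ^ 4) ≠ 0 := qPoch_self_ne_zero hq (by norm_num)
  have hE6 : qPoch (q ^ 6) (q ^ 6) ≠ 0 := qPoch_self_ne_zero hq (by norm_num)
  have hE12 : qPoch (q ^ 12) (q ^ 12) ≠ 0 := qPoch_self_ne_zero hq (by norm_num)
  have hE1_neg : qPoch (-q) (-q) =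
      qPoch (q ^ 2) (q ^ 2) ^ 3 / (qPoch q q * qPoch (q ^ 4) (q ^ 4)) := by
    rw [eq_div_iff (mul_ne_zero hE1 hE4), ← qPoch_neg_self hq, mul_assoc]
  have hE3_neg : qPoch (-q ^ 3) (-q ^ 3) =
      qPoch (q ^ 6) (q ^ 6) ^ 3 / (qPoch (q ^ 3) (q ^ 3) * qPoch (q ^ 12) (q ^ 12)) := by
    have h := qPoch_neg_self (norm_pow_lt_one hq three_ne_zero)
    simp only [← pow_mul, Nat.reduceMul] at h
    rw [eq_div_iff (mul_ne_zero hE3 hE12), ← h, mul_assoc]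
  simp only [c, Odd.neg_pow (by decide : Odd 3), ← pow_mul, Nat.reduceMul, hE1_neg, hE3_neg]
  field_simp

end CubicTheta

theorem q_div_c_two_dissection (q : ℂ) (hq0 : 0 < ‖q‖) (hq1 : ‖q‖ < 1) :
    q / c q =
      -(q ^ 2) * c (q ^ 4) ^ 2 / c (q ^ 2) ^ 3 +
        3 * q * qPoch (q ^ 4) (q ^ 4) ^ 2 * qPoch (q ^ 12) (q ^ 12) ^ 2 /
          (c (q ^ 2) ^ 2 * qPoch (q ^ 2) (q ^ 2) * qPoch (q ^ 6) (q ^ 6)) := by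
  have hq : q ≠ 0 := norm_pos_iff.1 hq0
  have hc2 : c (q ^ 2) ≠ 0 := c_ne_zero (norm_pow_lt_one hq1 two_ne_zero)
  have quotient : q / c q = q * (c (-q) * c (q ^ 4)) / c (q ^ 2) ^ 3 := by
    rw [div_eq_div_iff (c_ne_zero hq1) (pow_ne_zero 3 hc2), ← c_mul_c_neg hq1]
    ring
  rw [quotient, c_neg_two_dissection hq hq1, sub_mul, cEvenPart_mul_c_pow_four hq1]
  field_simp
  ring
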